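/- Let S ⊂ ℝ^k be a halfspace and Σ an additive subgroup of ℝ^k. If G ∈ (AP^k_Σ)^{n×n} takes Hermitian values (G(t)* = G(t) for all t ∈ ℝ^k) and admits a canonical left (AP_S)_Σ factorization, then G admits a canonical factorization in the symmetric form G = B* D B, where B is an n×n matrix function invertible in (AP^k_{Σ∩(−S)})^{n×n}, B* is its pointwise conjugate-transpose, and D is a constant diagonal matrix whose diagonal entries are ±1. -/

import Mathlib

/- Almost periodic functions of `k` real variables, their Bohr-Fourier
coefficients and spectra, the Wiener algebra, and halfspaces. -/

open MeasureTheory Filter BoundedContinuousFunction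

noncomputable section

/-- The Banach algebra of bounded continuous functions `ℝ^k → ℂ` (sup norm). -/
abbrev APB (k : ℕ) := BoundedContinuousFunction (Fin k → ℝ) ℂ

/-- The elementary exponential `e_λ(x) = e^{i⟨λ,x⟩}` as a bounded continuous function. -/
def apExp (k : ℕ) (lam : Fin k → ℝ) : APB k :=
  BoundedContinuousFunction.ofNormedAddCommGroup
    (fun x => Complex.exp (Complex.I * ((∑ j, lam j * x j : ℝ) : ℂ)))
    (by fun_prop) 1
    (fun x => by
      simp [Complex.norm_exp, Complex.mul_re])

/-- `AP^k`: the closed subalgebra of `L^∞`-type bounded continuous functions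
generated by all exponentials `e_λ`, `λ ∈ ℝ^k`. -/
def APalg (k : ℕ) : Subalgebra ℂ (APB k) :=
  (Algebra.adjoin ℂ (Set.range (apExp k))).topologicalClosure

/-- The Bohr-Fourier coefficient
`f_λ = lim_{T→∞} (2T)^{-k} ∫_{[-T,T]^k} e^{-i⟨λ,x⟩} f(x) dx`. -/
def bohrCoeff (k : ℕ) (f : (Fin k → ℝ) → ℂ) (lam : Fin k → ℝ) : ℂ :=
  limUnder atTop (fun T : ℝ =>
    (((2 * T) ^ k : ℝ) : ℂ)⁻¹ *
      ∫ x in Set.Icc (fun _ => -T : Fin k → ℝ) (fun _ => T),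
        Complex.exp (-(Complex.I * ((∑ j, lam j * x j : ℝ) : ℂ))) * f x)

/-- The Bohr-Fourier spectrum `σ(f) = {λ : f_λ ≠ 0}`. -/
def bohrSpectrum (k : ℕ) (f : (Fin k → ℝ) → ℂ) : Set (Fin k → ℝ) :=
  {lam | bohrCoeff k f lam ≠ 0}

/-- Membership in `AP^k_Δ = {f ∈ AP^k : σ(f) ⊆ Δ}`. -/
def APmem (k : ℕ) (Δ : Set (Fin k → ℝ)) (f : APB k) : Prop :=
  f ∈ APalg k ∧ bohrSpectrum k ⇑f ⊆ Δ

/-- Membership in the Wiener algebra `APW^k_Δ`: almost periodic with spectrum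
in `Δ` and absolutely convergent Bohr-Fourier series. -/
def APWmem (k : ℕ) (Δ : Set (Fin k → ℝ)) (f : APB k) : Prop :=
  APmem k Δ f ∧ Summable (fun lam => ‖bohrCoeff k (⇑f) lam‖)

/-- The Wiener norm `‖f‖_W = ∑_λ |f_λ|`. -/
def wienerNorm (k : ℕ) (f : (Fin k → ℝ) → ℂ) : ℝ :=
  ∑' lam, ‖bohrCoeff k f lam‖

/-- A halfspace `S ⊂ ℝ^k`: `ℝ^k = S ∪ (-S)`, `S ∩ (-S) = {0}`, and `S` is
closed under addition and under multiplication by nonnegative reals. -/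
structure IsHalfspace (k : ℕ) (S : Set (Fin k → ℝ)) : Prop where
  union : S ∪ -S = Set.univ
  inter : S ∩ -S = {0}
  add_mem : ∀ x ∈ S, ∀ y ∈ S, x + y ∈ S
  smul_mem : ∀ x ∈ S, ∀ a : ℝ, 0 ≤ a → a • x ∈ S

/- Left `(AP_S)_Σ` and `(APW_S)_Σ` factorizations of rectangular almost
periodic matrix functions. -/

/-- `G = G⁺ · diag(e_{λ_1},…,e_{λ_p}) · G⁻` is a left `(AP_S)_Σ` factorization
of `G` with factorization indices `lam`: the entries of `G⁺` lie in
`AP^k_{Σ∩S}` and `G⁺` is right invertible over `AP^k_{Σ∩S}`, the entries of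
`G⁻` lie in `AP^k_{Σ∩(-S)}` and `G⁻` is left invertible over `AP^k_{Σ∩(-S)}`,
and all indices lie in `Σ`. -/
def IsAPFactorization (k : ℕ) {m n p : ℕ} (S Sg : Set (Fin k → ℝ))
    (G : Matrix (Fin m) (Fin n) (APB k)) (lam : Fin p → (Fin k → ℝ))
    (Gp : Matrix (Fin m) (Fin p) (APB k)) (Gm : Matrix (Fin p) (Fin n) (APB k)) : Prop :=
  (∀ i j, APmem k (Sg ∩ S) (Gp i j)) ∧
  (∀ i j, APmem k (Sg ∩ (-S)) (Gm i j)) ∧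
  (∀ j, lam j ∈ Sg) ∧
  (∃ Gpr : Matrix (Fin p) (Fin m) (APB k),
      (∀ i j, APmem k (Sg ∩ S) (Gpr i j)) ∧ Gp * Gpr = 1) ∧
  (∃ Gml : Matrix (Fin n) (Fin p) (APB k),
      (∀ i j, APmem k (Sg ∩ (-S)) (Gml i j)) ∧ Gml * Gm = 1) ∧
  G = Gp * Matrix.diagonal (fun j => apExp k (lam j)) * Gm

/-- A left `(APW_S)_Σ` factorization: as `IsAPFactorization`, with the Wiener
algebra `APW` in place of `AP` throughout. -/
def IsAPWFactorization (k : ℕ) {m n p : ℕ} (S Sg : Set (Fin k → ℝ))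
    (G : Matrix (Fin m) (Fin n) (APB k)) (lam : Fin p → (Fin k → ℝ))
    (Gp : Matrix (Fin m) (Fin p) (APB k)) (Gm : Matrix (Fin p) (Fin n) (APB k)) : Prop :=
  (∀ i j, APWmem k (Sg ∩ S) (Gp i j)) ∧
  (∀ i j, APWmem k (Sg ∩ (-S)) (Gm i j)) ∧
  (∀ j, lam j ∈ Sg) ∧
  (∃ Gpr : Matrix (Fin p) (Fin m) (APB k),
      (∀ i j, APWmem k (Sg ∩ S) (Gpr i j)) ∧ Gp * Gpr = 1) ∧
  (∃ Gml : Matrix (Fin n) (Fin p) (APB k),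
      (∀ i j, APWmem k (Sg ∩ (-S)) (Gml i j)) ∧ Gml * Gm = 1) ∧
  G = Gp * Matrix.diagonal (fun j => apExp k (lam j)) * Gm


open Topology

section BohrMean

variable {k : ℕ}

@[simp]
theorem apExp_apply (lam x : Fin k → ℝ) :
    apExp k lam x = Complex.exp (Complex.I * ((∑ j, lam j * x j : ℝ) : ℂ)) := rfl

theorem apExp_zero : apExp k 0 = 1 := by
  ext x; simp

theorem apExp_add (lam mu : Fin k → ℝ) : apExp k (lam + mu) = apExp k lam * apExp k mu := by
  ext x
  simp [add_mul, Finset.sum_add_distrib, mul_add, Complex.exp_add]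

theorem star_apExp (lam : Fin k → ℝ) : star (apExp k lam) = apExp k (-lam) := by
  ext x
  rw [BoundedContinuousFunction.star_apply, apExp_apply, apExp_apply, ← starRingEnd_apply,
    ← Complex.exp_conj]
  simp

theorem apExp_mem (lam : Fin k → ℝ) : apExp k lam ∈ APalg k :=
  Subalgebra.le_topologicalClosure _ (Algebra.subset_adjoin ⟨lam, rfl⟩)

theorem mem_APalg_of_forall_exists {f : APB k}
    (h : ∀ ε > 0, ∃ g ∈ APalg k, ‖f - g‖ ≤ ε) : f ∈ APalg k := by
  have hf : f ∈ closure (APalg k : Set (APB k)) := by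
    rw [Metric.mem_closure_iff]
    intro ε hε
    obtain ⟨g, hg, hd⟩ := h (ε / 2) (by positivity)
    exact ⟨g, hg, by rw [dist_eq_norm]; linarith⟩
  exact (Subalgebra.isClosed_topologicalClosure _).closure_subset hf

theorem APalg_eq_closure_span :
    (APalg k : Set (APB k)) = closure (Submodule.span ℂ (Set.range (apExp k)) : Set (APB k)) := by
  have h : Subalgebra.toSubmodule (Algebra.adjoin ℂ (Set.range (apExp k))) =
      Submodule.span ℂ (Set.range (apExp k)) := by
    apply Algebra.adjoin_eq_span_of_subset
    refine subset_trans ?_ Submodule.subset_span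
    intro f hf
    induction hf using Submonoid.closure_induction with
    | mem x hx => exact hx
    | one => exact ⟨0, apExp_zero⟩
    | mul x y _ _ hx hy =>
      obtain ⟨a, rfl⟩ := hx
      obtain ⟨b, rfl⟩ := hy
      exact ⟨a + b, apExp_add a b⟩
  rw [APalg, Subalgebra.topologicalClosure_coe, ← h]
  rfl

/-- Induction principle for almost periodic functions: exponentials, linear combinations and
uniform limits. -/
theorem APalg_induction {P : APB k → Prop} (hexp : ∀ lam, P (apExp k lam))
    (hadd : ∀ f g, P f → P g → P (f + g)) (hsmul : ∀ (c : ℂ) f, P f → P (c • f))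
    (hlim : ∀ f, (∀ ε > 0, ∃ g, P g ∧ ‖f - g‖ ≤ ε) → P f) {f : APB k} (hf : f ∈ APalg k) :
    P f := by
  have hspan : ∀ g ∈ Submodule.span ℂ (Set.range (apExp k)), P g := by
    intro g hg
    induction hg using Submodule.span_induction with
    | mem x hx => obtain ⟨a, rfl⟩ := hx; exact hexp a
    | zero => simpa using hsmul 0 _ (hexp 0)
    | add x y _ _ hx hy => exact hadd _ _ hx hy
    | smul c x _ hx => exact hsmul _ _ hx
  have hf' : f ∈ closure (Submodule.span ℂ (Set.range (apExp k)) : Set (APB k)) := by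
    rw [← APalg_eq_closure_span]; exact hf
  refine hlim f fun ε hε => ?_
  obtain ⟨g, hg, hd⟩ := Metric.mem_closure_iff.1 hf' ε hε
  exact ⟨g, hspan g hg, by rw [← dist_eq_norm]; exact hd.le⟩

theorem star_mem_APalg {f : APB k} (hf : f ∈ APalg k) : star f ∈ APalg k := by
  refine APalg_induction (P := fun f => star f ∈ APalg k) ?_ ?_ ?_ ?_ hf
  · intro lam; rw [star_apExp]; exact apExp_mem _
  · intro f g hf hg; rw [star_add]; exact add_mem hf hg
  · intro c f hf; rw [star_smul]; exact (APalg k).smul_mem hf _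
  · intro f h
    refine mem_APalg_of_forall_exists fun ε hε => ?_
    obtain ⟨g, hg, hd⟩ := h ε hε
    exact ⟨star g, hg, by rwa [← star_sub, norm_star]⟩

/-- Translation of a bounded continuous function by `t`. -/
def apTranslate (t : Fin k → ℝ) (f : APB k) : APB k :=
  f.compContinuous ⟨fun x => x + t, by fun_prop⟩

@[simp]
theorem apTranslate_apply (t x : Fin k → ℝ) (f : APB k) : apTranslate t f x = f (x + t) := rfl

theorem norm_apTranslate_le (t : Fin k → ℝ) (f : APB k) : ‖apTranslate t f‖ ≤ ‖f‖ :=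
  (BoundedContinuousFunction.norm_le (norm_nonneg _)).2 fun x => f.norm_coe_le_norm (x + t)

theorem apTranslate_add (t : Fin k → ℝ) (f g : APB k) :
    apTranslate t (f + g) = apTranslate t f + apTranslate t g := rfl

theorem apTranslate_sub (t : Fin k → ℝ) (f g : APB k) :
    apTranslate t (f - g) = apTranslate t f - apTranslate t g := rfl

theorem apTranslate_smul (t : Fin k → ℝ) (c : ℂ) (f : APB k) :
    apTranslate t (c • f) = c • apTranslate t f := rfl

theorem apTranslate_apExp (t lam : Fin k → ℝ) :
    apTranslate t (apExp k lam) = apExp k lam t • apExp k lam := by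
  ext x
  simp [mul_add, Finset.sum_add_distrib, Complex.exp_add, mul_comm]

theorem apTranslate_mem {f : APB k} (hf : f ∈ APalg k) (t : Fin k → ℝ) :
    apTranslate t f ∈ APalg k := by
  refine APalg_induction (P := fun f => apTranslate t f ∈ APalg k) ?_ ?_ ?_ ?_ hf
  · intro lam; rw [apTranslate_apExp]; exact (APalg k).smul_mem (apExp_mem _) _
  · intro f g hf hg; exact add_mem hf hg
  · intro c f hf; exact (APalg k).smul_mem hf _
  · intro f h
    refine mem_APalg_of_forall_exists fun ε hε => ?_
    obtain ⟨g, hg, hd⟩ := h ε hε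
    exact ⟨apTranslate t g, hg, (norm_apTranslate_le t (f - g)).trans hd⟩

/-- The translates of an almost periodic function form a totally bounded set. -/
theorem totallyBounded_range_apTranslate {f : APB k} (hf : f ∈ APalg k) :
    TotallyBounded (Set.range fun t => apTranslate t f) := by
  refine APalg_induction (P := fun f => TotallyBounded (Set.range fun t => apTranslate t f))
    ?_ ?_ ?_ ?_ hf
  · intro lam
    have hK : IsCompact ((fun z : ℂ => z • apExp k lam) '' Metric.closedBall 0 1) :=
      (isCompact_closedBall _ _).image (by fun_prop)
    refine hK.totallyBounded.subset ?_
    rintro _ ⟨t, rfl⟩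
    refine ⟨apExp k lam t, ?_, (apTranslate_apExp t lam).symm⟩
    simp [Complex.norm_exp]
  · intro f g hf hg
    have hK := hf.closure.isCompact_of_isClosed isClosed_closure |>.add
      (hg.closure.isCompact_of_isClosed isClosed_closure)
    refine hK.totallyBounded.subset ?_
    rintro _ ⟨t, rfl⟩
    exact Set.add_mem_add (subset_closure (Set.mem_range_self t))
      (subset_closure (Set.mem_range_self t))
  · intro c f hf
    have hK := hf.image (uniformContinuous_const_smul c)
    refine hK.subset ?_
    rintro _ ⟨t, rfl⟩
    exact ⟨_, ⟨t, rfl⟩, rfl⟩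
  · intro f h
    rw [Metric.totallyBounded_iff]
    intro ε hε
    obtain ⟨g, hg, hd⟩ := h (ε / 2) (by positivity)
    obtain ⟨s, hs, hcov⟩ := Metric.totallyBounded_iff.1 hg (ε / 2) (by positivity)
    refine ⟨s, hs, ?_⟩
    rintro _ ⟨t, rfl⟩
    obtain ⟨y, hy, hyt⟩ := Set.mem_iUnion₂.1 (hcov ⟨t, rfl⟩)
    refine Set.mem_iUnion₂.2 ⟨y, hy, ?_⟩
    rw [Metric.mem_ball] at hyt ⊢
    have h1 : dist (apTranslate t f) (apTranslate t g) ≤ ε / 2 := by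
      rw [dist_eq_norm, ← apTranslate_sub]
      exact (norm_apTranslate_le t _).trans hd
    linarith [dist_triangle (apTranslate t f) (apTranslate t g) y]

/-- The average of `f` over the box `[-T, T]^k`. -/
def boxAvg (k : ℕ) (T : ℝ) (f : (Fin k → ℝ) → ℂ) : ℂ :=
  (((2 * T) ^ k : ℝ) : ℂ)⁻¹ * ∫ x in Set.Icc (fun _ => -T : Fin k → ℝ) (fun _ => T), f x

theorem integrableOn_box (T : ℝ) (f : APB k) :
    IntegrableOn f (Set.Icc (fun _ => -T : Fin k → ℝ) (fun _ => T)) :=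
  f.continuous.continuousOn.integrableOn_compact isCompact_Icc

theorem boxAvg_add (T : ℝ) (f g : APB k) :
    boxAvg k T ⇑(f + g) = boxAvg k T f + boxAvg k T g := by
  simp only [boxAvg, BoundedContinuousFunction.coe_add, Pi.add_apply]
  rw [integral_add (integrableOn_box T f) (integrableOn_box T g), mul_add]

theorem boxAvg_smul (T : ℝ) (c : ℂ) (f : APB k) :
    boxAvg k T ⇑(c • f) = c * boxAvg k T f := by
  simp only [boxAvg, BoundedContinuousFunction.coe_smul, smul_eq_mul]
  rw [integral_const_mul]
  ring

theorem boxAvg_sub (T : ℝ) (f g : APB k) :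
    boxAvg k T ⇑(f - g) = boxAvg k T f - boxAvg k T g := by
  rw [sub_eq_add_neg, ← neg_one_smul ℂ g, boxAvg_add, boxAvg_smul]
  ring

theorem boxAvg_star (T : ℝ) (f : APB k) :
    boxAvg k T ⇑(star f) = star (boxAvg k T f) := by
  simp only [boxAvg, BoundedContinuousFunction.star_apply, star_mul']
  congr 1
  · rw [star_inv₀]; simp
  · exact integral_conj

theorem volume_box (T : ℝ) (hT : 0 < T) :
    volume.real (Set.Icc (fun _ => -T : Fin k → ℝ) (fun _ => T)) = (2 * T) ^ k := by
  rw [measureReal_def, Real.volume_Icc_pi_toReal (fun _ => by linarith)]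
  simp [two_mul]

theorem norm_boxAvg_le {T : ℝ} (hT : 0 < T) (f : APB k) : ‖boxAvg k T f‖ ≤ ‖f‖ := by
  have h := norm_setIntegral_le_of_norm_le_const (μ := volume) (f := f) (C := ‖f‖)
    (s := Set.Icc (fun _ => -T : Fin k → ℝ) (fun _ => T))
    isCompact_Icc.measure_lt_top (fun x _ => f.norm_coe_le_norm x)
  rw [volume_box T hT] at h
  rw [boxAvg, norm_mul, norm_inv, Complex.norm_real, Real.norm_of_nonneg (by positivity),
    inv_mul_le_iff₀ (by positivity), mul_comm]
  exact h

theorem re_boxAvg_nonneg {T : ℝ} (hT : 0 < T) (f : APB k) (hf : ∀ x, 0 ≤ (f x).re) :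
    0 ≤ (boxAvg k T f).re := by
  rw [boxAvg, ← Complex.ofReal_inv, Complex.re_ofReal_mul]
  refine mul_nonneg (by positivity) ?_
  have h := integral_re (𝕜 := ℂ) (integrableOn_box T f)
  simp only [RCLike.re_to_complex] at h
  rw [← h]
  exact integral_nonneg hf

theorem tendsto_average_exp (a : ℝ) :
    Tendsto (fun T : ℝ => ((2 * T : ℝ) : ℂ)⁻¹ *
      ∫ x in Set.Icc (-T) T, Complex.exp (Complex.I * ((a * x : ℝ) : ℂ))) atTop
      (𝓝 (if a = 0 then 1 else 0)) := by
  split_ifs with ha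
  · subst ha
    refine tendsto_const_nhds.congr' ?_
    filter_upwards [eventually_gt_atTop 0] with T hT
    have : ((2 * T : ℝ) : ℂ) ≠ 0 := by exact_mod_cast (by positivity : (2 * T : ℝ) ≠ 0)
    simp only [zero_mul, Complex.ofReal_zero, mul_zero, Complex.exp_zero, integral_const,
      measureReal_restrict_apply_univ, Real.volume_real_Icc]
    rw [max_eq_left (by linarith), Complex.real_smul, mul_one, show T - -T = 2 * T by ring,
      inv_mul_cancel₀ this]
  · have hc : Complex.I * (a : ℂ) ≠ 0 := mul_ne_zero Complex.I_ne_zero (by exact_mod_cast ha)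
    rw [tendsto_zero_iff_norm_tendsto_zero]
    have hlim : Tendsto (fun T : ℝ => (2 * T)⁻¹ * (2 / |a|)) atTop (𝓝 0) := by
      have : Tendsto (fun T : ℝ => 2 * T) atTop atTop :=
        tendsto_id.const_mul_atTop (by norm_num)
      simpa using this.inv_tendsto_atTop.mul_const (2 / |a|)
    refine squeeze_zero' (Eventually.of_forall fun T => norm_nonneg _) ?_ hlim
    filter_upwards [eventually_gt_atTop 0] with T hT
    rw [norm_mul, norm_inv, Complex.norm_real, Real.norm_of_nonneg (by positivity)]
    refine mul_le_mul_of_nonneg_left ?_ (by positivity)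
    rw [integral_Icc_eq_integral_Ioc, ← intervalIntegral.integral_of_le (by linarith)]
    have : ∀ x : ℝ, Complex.exp (Complex.I * ((a * x : ℝ) : ℂ)) =
        Complex.exp (Complex.I * a * x) := fun x => by push_cast; ring_nf
    simp only [this]
    rw [integral_exp_mul_complex hc, norm_div, norm_mul, Complex.norm_I, one_mul,
      Complex.norm_real, Real.norm_eq_abs]
    gcongr
    refine (norm_sub_le _ _).trans ?_
    simp [Complex.norm_exp]
    norm_num

theorem tendsto_boxAvg_apExp (lam : Fin k → ℝ) :
    Tendsto (fun T => boxAvg k T (apExp k lam)) atTop (𝓝 (if lam = 0 then 1 else 0)) := by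
  have h := tendsto_finsetProd (Finset.univ : Finset (Fin k))
    (fun j _ => tendsto_average_exp (lam j))
  have hlim : (∏ j, if lam j = 0 then (1 : ℂ) else 0) = if lam = 0 then 1 else 0 := by
    by_cases hl : lam = 0
    · simp [hl]
    · obtain ⟨j, hj⟩ := Function.ne_iff.1 hl
      rw [if_neg hl]
      exact Finset.prod_eq_zero (Finset.mem_univ j) (if_neg hj)
  rw [← hlim]
  refine h.congr fun T => ?_
  rw [Finset.prod_mul_distrib, boxAvg]
  congr 1
  · rw [Finset.prod_const, Finset.card_univ, Fintype.card_fin, inv_pow, Complex.ofReal_pow]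
  · have hpi : (volume : Measure (Fin k → ℝ)).restrict
        (Set.Icc (fun _ => -T : Fin k → ℝ) (fun _ => T)) =
        Measure.pi fun _ => volume.restrict (Set.Icc (-T) T) := by
      rw [← Set.pi_univ_Icc, volume_pi, Measure.restrict_pi_pi]
    rw [hpi, ← integral_fintype_prod_eq_prod
      (f := fun j x => Complex.exp (Complex.I * ((lam j * x : ℝ) : ℂ)))]
    congr 1
    ext x
    rw [apExp_apply, ← Complex.exp_sum, Complex.ofReal_sum, Finset.mul_sum]

/-- The Bohr mean of a bounded continuous function. -/
def apMean (f : APB k) : ℂ := limUnder atTop fun T => boxAvg k T f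

theorem tendsto_apMean {f : APB k} (hf : f ∈ APalg k) :
    Tendsto (fun T => boxAvg k T f) atTop (𝓝 (apMean f)) := by
  apply tendsto_nhds_limUnder
  refine APalg_induction (P := fun f => ∃ m, Tendsto (fun T => boxAvg k T f) atTop (𝓝 m))
    ?_ ?_ ?_ ?_ hf
  · exact fun lam => ⟨_, tendsto_boxAvg_apExp lam⟩
  · rintro f g ⟨a, ha⟩ ⟨b, hb⟩
    exact ⟨a + b, by simpa only [boxAvg_add] using ha.add hb⟩
  · rintro c f ⟨a, ha⟩
    exact ⟨c * a, by simpa only [boxAvg_smul] using ha.const_mul c⟩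
  · intro f h
    apply cauchy_map_iff_exists_tendsto.1
    rw [Metric.cauchy_iff]
    refine ⟨inferInstance, fun ε hε => ?_⟩
    obtain ⟨g, ⟨m, hm⟩, hd⟩ := h (ε / 8) (by positivity)
    refine ⟨Metric.ball m (ε / 2), ?_, fun x hx y hy => ?_⟩
    · rw [mem_map]
      filter_upwards [hm (Metric.ball_mem_nhds m (ε := ε / 4) (by positivity)),
        eventually_gt_atTop 0] with T hT hT0
      have h1 := norm_boxAvg_le hT0 (f - g)
      rw [boxAvg_sub, ← dist_eq_norm] at h1
      simp only [Set.mem_preimage, Metric.mem_ball] at hT ⊢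
      linarith [dist_triangle (boxAvg k T f) (boxAvg k T g) m]
    · rw [Metric.mem_ball] at hx hy
      linarith [dist_triangle_right x y m]

theorem apMean_eq_of_tendsto {f : APB k} {m : ℂ}
    (h : Tendsto (fun T => boxAvg k T f) atTop (𝓝 m)) : apMean f = m := h.limUnder_eq

theorem apMean_apExp (lam : Fin k → ℝ) : apMean (apExp k lam) = if lam = 0 then 1 else 0 :=
  apMean_eq_of_tendsto (tendsto_boxAvg_apExp lam)

theorem apMean_add {f g : APB k} (hf : f ∈ APalg k) (hg : g ∈ APalg k) :
    apMean (f + g) = apMean f + apMean g :=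
  apMean_eq_of_tendsto <| by
    simpa only [boxAvg_add] using (tendsto_apMean hf).add (tendsto_apMean hg)

theorem apMean_sub {f g : APB k} (hf : f ∈ APalg k) (hg : g ∈ APalg k) :
    apMean (f - g) = apMean f - apMean g :=
  apMean_eq_of_tendsto <| by
    simpa only [boxAvg_sub] using (tendsto_apMean hf).sub (tendsto_apMean hg)

theorem apMean_smul (c : ℂ) {f : APB k} (hf : f ∈ APalg k) :
    apMean (c • f) = c * apMean f :=
  apMean_eq_of_tendsto <| by simpa only [boxAvg_smul] using (tendsto_apMean hf).const_mul c

theorem apMean_star {f : APB k} (hf : f ∈ APalg k) : apMean (star f) = star (apMean f) :=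
  apMean_eq_of_tendsto <| by simpa only [boxAvg_star] using (tendsto_apMean hf).star

theorem norm_apMean_le {f : APB k} (hf : f ∈ APalg k) : ‖apMean f‖ ≤ ‖f‖ :=
  le_of_tendsto (tendsto_apMean hf).norm <|
    (eventually_gt_atTop 0).mono fun _ hT => norm_boxAvg_le hT f

theorem re_apMean_nonneg {f : APB k} (hf : f ∈ APalg k) (h : ∀ x, 0 ≤ (f x).re) :
    0 ≤ (apMean f).re :=
  ge_of_tendsto ((Complex.continuous_re.tendsto _).comp (tendsto_apMean hf)) <|
    (eventually_gt_atTop 0).mono fun _ hT => re_boxAvg_nonneg hT f h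

theorem apMean_sum {ι : Type*} (s : Finset ι) (f : ι → APB k) (hf : ∀ i ∈ s, f i ∈ APalg k) :
    apMean (∑ i ∈ s, f i) = ∑ i ∈ s, apMean (f i) :=
  apMean_eq_of_tendsto <| by
    have h : ∀ T, boxAvg k T ⇑(∑ i ∈ s, f i) = ∑ i ∈ s, boxAvg k T (f i) := fun T =>
      map_sum (AddMonoidHom.mk' (fun g : APB k => boxAvg k T g) (boxAvg_add T)) f s
    simpa only [h] using tendsto_finsetSum s fun i hi => tendsto_apMean (hf i hi)

theorem apMean_apTranslate {f : APB k} (hf : f ∈ APalg k) (t : Fin k → ℝ) :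
    apMean (apTranslate t f) = apMean f := by
  have hmem : ∀ {g : APB k}, g ∈ APalg k → apTranslate t g ∈ APalg k :=
    fun hg => apTranslate_mem hg t
  refine (APalg_induction
    (P := fun f => f ∈ APalg k ∧ apMean (apTranslate t f) = apMean f) ?_ ?_ ?_ ?_ hf).2
  · intro lam
    refine ⟨apExp_mem lam, ?_⟩
    rw [apTranslate_apExp, apMean_smul _ (apExp_mem lam), apMean_apExp]
    split_ifs with h
    · simp [h]
    · simp
  · rintro f g ⟨hf, hf'⟩ ⟨hg, hg'⟩
    refine ⟨add_mem hf hg, ?_⟩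
    rw [apTranslate_add, apMean_add (hmem hf) (hmem hg), apMean_add hf hg, hf', hg']
  · rintro c f ⟨hf, hf'⟩
    refine ⟨(APalg k).smul_mem hf c, ?_⟩
    rw [apTranslate_smul, apMean_smul _ (hmem hf), apMean_smul _ hf, hf']
  · intro f h
    have hf : f ∈ APalg k := mem_APalg_of_forall_exists fun ε hε =>
      (h ε hε).imp fun g hg => ⟨hg.1.1, hg.2⟩
    refine ⟨hf, eq_of_forall_dist_le fun ε hε => ?_⟩
    obtain ⟨g, ⟨hg, hg'⟩, hd⟩ := h (ε / 2) (by positivity)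
    have h1 := norm_apMean_le (hmem (sub_mem hf hg))
    have h2 := norm_apMean_le (sub_mem hf hg)
    rw [apTranslate_sub, apMean_sub (hmem hf) (hmem hg), hg', ← dist_eq_norm] at h1
    rw [apMean_sub hf hg, ← dist_eq_norm] at h2
    have h3 := norm_apTranslate_le t (f - g)
    rw [apTranslate_sub] at h3
    linarith [dist_triangle_right (apMean (apTranslate t f)) (apMean f) (apMean g)]

/-- The Bohr mean is faithful: a nonnegative almost periodic function with vanishing mean
vanishes. -/
theorem re_eq_zero_of_apMean_eq_zero {f : APB k} (hf : f ∈ APalg k) (h : ∀ x, 0 ≤ (f x).re)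
    (h0 : apMean f = 0) (x : Fin k → ℝ) : (f x).re = 0 := by
  by_contra hne
  set ε := (f x).re / 2 with hε
  have hεpos : 0 < ε := by have := (h x).lt_of_ne' hne; positivity
  obtain ⟨s, hsub, hs, hcov⟩ :=
    Metric.finite_approx_of_totallyBounded (totallyBounded_range_apTranslate hf) ε hεpos
  have hmem : ∀ g ∈ hs.toFinset, g ∈ APalg k := by
    intro g hg
    obtain ⟨t, rfl⟩ := hsub (hs.mem_toFinset.1 hg)
    exact apTranslate_mem hf t
  have hmean : apMean (∑ g ∈ hs.toFinset, g) = 0 := by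
    rw [apMean_sum _ _ hmem]
    refine Finset.sum_eq_zero fun g hg => ?_
    obtain ⟨t, rfl⟩ := hsub (hs.mem_toFinset.1 hg)
    exact (apMean_apTranslate hf t).trans h0
  have hsum : ∑ g ∈ hs.toFinset, g ∈ APalg k := sum_mem hmem
  have hcst : (ε : ℂ) • apExp k 0 ∈ APalg k := (APalg k).smul_mem (apExp_mem 0) _
  have hlow := re_apMean_nonneg (sub_mem hsum hcst) fun y => by
    obtain ⟨g, hg, hgy⟩ := Set.mem_iUnion₂.1 (hcov ⟨x - y, rfl⟩)
    have hd : ‖apTranslate (x - y) f - g‖ < ε := by rwa [← dist_eq_norm]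
    have hp := ((apTranslate (x - y) f - g).norm_coe_le_norm y).trans_lt hd
    have hre := (Complex.abs_re_le_norm _).trans_lt hp
    have hgval : ε ≤ (g y).re := by
      rw [BoundedContinuousFunction.sub_apply, apTranslate_apply, add_sub_cancel,
        Complex.sub_re] at hre
      linarith [(abs_lt.1 hre).2]
    have hsingle : (g y).re ≤ ∑ g' ∈ hs.toFinset, (g' y).re := by
      refine Finset.single_le_sum (f := fun g' : APB k => (g' y).re) (fun g' hg' => ?_)
        (hs.mem_toFinset.2 hg)
      obtain ⟨t, rfl⟩ := hsub (hs.mem_toFinset.1 hg')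
      exact h _
    rw [BoundedContinuousFunction.sub_apply, BoundedContinuousFunction.sum_apply, Complex.sub_re,
      Complex.re_sum, apExp_zero]
    simp
    linarith
  rw [apMean_sub hsum hcst, hmean, apMean_smul _ (apExp_mem 0), apMean_apExp] at hlow
  simp at hlow
  linarith

end BohrMean

section BohrSpectrum

variable {k : ℕ}

/-- Almost periodic functions, to be equipped with the mean-square seminorm. -/
def APMeanSq (k : ℕ) : Type := APalg k

instance : AddCommGroup (APMeanSq k) := inferInstanceAs (AddCommGroup (APalg k))

instance : Module ℂ (APMeanSq k) := inferInstanceAs (Module ℂ (APalg k))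

/-- An almost periodic function as an element of the mean-square space. -/
def APMeanSq.mk (f : APB k) (hf : f ∈ APalg k) : APMeanSq k := (⟨f, hf⟩ : APalg k)

/-- The underlying bounded continuous function. -/
def APMeanSq.val (f : APMeanSq k) : APB k := Subtype.val (p := (· ∈ APalg k)) f

theorem APMeanSq.val_mem (f : APMeanSq k) : f.val ∈ APalg k := Subtype.property f

/-- The positive semidefinite form `⟨f, g⟩ = M(f̄ g)` on almost periodic functions. -/
abbrev apMeanSqCore (k : ℕ) : PreInnerProductSpace.Core ℂ (APMeanSq k) where
  inner f g := apMean (star f.val * g.val)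
  conj_inner_symm f g := by
    change star (apMean (star g.val * f.val)) = apMean (star f.val * g.val)
    rw [← apMean_star (mul_mem (star_mem_APalg g.val_mem) f.val_mem), star_mul, star_star]
  re_inner_nonneg f := by
    refine re_apMean_nonneg (mul_mem (star_mem_APalg f.val_mem) f.val_mem) fun x => ?_
    simp only [BoundedContinuousFunction.mul_apply, BoundedContinuousFunction.star_apply]
    rw [RCLike.star_def, ← Complex.normSq_eq_conj_mul_self, Complex.ofReal_re]
    exact Complex.normSq_nonneg _
  add_left f g h := by
    change apMean (star (f.val + g.val) * h.val) = _
    rw [star_add, add_mul, apMean_add (mul_mem (star_mem_APalg f.val_mem) h.val_mem)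
      (mul_mem (star_mem_APalg g.val_mem) h.val_mem)]
  smul_left f g c := by
    change apMean (star (c • f.val) * g.val) = _
    rw [star_smul, smul_mul_assoc, apMean_smul _ (mul_mem (star_mem_APalg f.val_mem) g.val_mem)]
    rfl

instance : SeminormedAddCommGroup (APMeanSq k) :=
  @InnerProductSpace.Core.toSeminormedAddCommGroup ℂ _ _ _ _ (apMeanSqCore k)

instance : InnerProductSpace ℂ (APMeanSq k) := InnerProductSpace.ofCore (apMeanSqCore k)

theorem APMeanSq.inner_def (f g : APMeanSq k) : inner ℂ f g = apMean (star f.val * g.val) := rfl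

theorem APMeanSq.norm_le (f : APMeanSq k) : ‖f‖ ≤ ‖f.val‖ := by
  refine abs_le_of_sq_le_sq' ?_ (norm_nonneg _) |>.2
  have h1 : ‖f‖ ^ 2 = (apMean (star f.val * f.val)).re := norm_sq_eq_re_inner (𝕜 := ℂ) f
  have h2 := norm_apMean_le (mul_mem (star_mem_APalg f.val_mem) f.val_mem)
  have h3 := norm_mul_le (star f.val) f.val
  rw [norm_star] at h3
  rw [h1, sq]
  exact (Complex.re_le_norm _).trans (h2.trans h3)

/-- The exponentials in the completion of the almost periodic functions. -/
def apExpHilbert (k : ℕ) (lam : Fin k → ℝ) : UniformSpace.Completion (APMeanSq k) :=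
  (APMeanSq.mk (apExp k lam) (apExp_mem lam) : UniformSpace.Completion (APMeanSq k))

theorem orthonormal_apExpHilbert : Orthonormal ℂ (apExpHilbert k) := by
  rw [orthonormal_iff_ite]
  intro lam mu
  rw [apExpHilbert, apExpHilbert, UniformSpace.Completion.inner_coe, APMeanSq.inner_def]
  change apMean (star (apExp k lam) * apExp k mu) = _
  rw [star_apExp, ← apExp_add, apMean_apExp]
  simp [neg_add_eq_zero]

theorem dense_span_apExpHilbert :
    ⊤ ≤ (Submodule.span ℂ (Set.range (apExpHilbert k))).topologicalClosure := by
  suffices h : ∀ x, x ∈ (Submodule.span ℂ (Set.range (apExpHilbert k))).topologicalClosure from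
    fun x _ => h x
  intro x
  induction x using UniformSpace.Completion.induction_on with
  | hp => exact (Submodule.span ℂ (Set.range (apExpHilbert k))).isClosed_topologicalClosure
  | ih f =>
    suffices h : ∀ hf : f.val ∈ APalg k,
        (APMeanSq.mk f.val hf : UniformSpace.Completion (APMeanSq k)) ∈
        (Submodule.span ℂ (Set.range (apExpHilbert k))).topologicalClosure from h f.val_mem
    refine fun hf => (APalg_induction (P := fun g => ∃ hg : g ∈ APalg k,
      (APMeanSq.mk g hg : UniformSpace.Completion (APMeanSq k)) ∈
        (Submodule.span ℂ (Set.range (apExpHilbert k))).topologicalClosure) ?_ ?_ ?_ ?_ hf).2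
    · exact fun lam => ⟨apExp_mem lam, Submodule.le_topologicalClosure _
        (Submodule.subset_span ⟨lam, rfl⟩)⟩
    · rintro g h ⟨hg, hg'⟩ ⟨hh, hh'⟩
      refine ⟨add_mem hg hh, ?_⟩
      have := add_mem hg' hh'
      rwa [← UniformSpace.Completion.coe_add] at this
    · rintro c g ⟨hg, hg'⟩
      refine ⟨(APalg k).smul_mem hg c, ?_⟩
      have := Submodule.smul_mem _ c hg'
      rwa [← UniformSpace.Completion.coe_smul] at this
    · intro g h
      have hg : g ∈ APalg k := mem_APalg_of_forall_exists fun ε hε =>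
        (h ε hε).imp fun g' hg' => ⟨hg'.1.1, hg'.2⟩
      refine ⟨hg, ?_⟩
      rw [← SetLike.mem_coe, ← (Submodule.isClosed_topologicalClosure _).closure_eq,
        Metric.mem_closure_iff]
      intro ε hε
      obtain ⟨g', ⟨hg', hmem⟩, hd⟩ := h (ε / 2) (by positivity)
      refine ⟨_, hmem, ?_⟩
      rw [UniformSpace.Completion.dist_eq, dist_eq_norm]
      refine (APMeanSq.norm_le _).trans_lt (hd.trans_lt (by linarith))

/-- The exponentials form a Hilbert basis of the mean-square completion. -/
def apExpBasis (k : ℕ) : HilbertBasis (Fin k → ℝ) ℂ (UniformSpace.Completion (APMeanSq k)) :=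
  HilbertBasis.mk orthonormal_apExpHilbert dense_span_apExpHilbert

theorem bohrCoeff_eq_apMean (f : APB k) (lam : Fin k → ℝ) :
    bohrCoeff k f lam = apMean (apExp k (-lam) * f) := by
  unfold bohrCoeff apMean boxAvg
  simp

/-- **Parseval's identity** for almost periodic functions. -/
theorem hasSum_bohrCoeff {f g : APB k} (hf : f ∈ APalg k) (hg : g ∈ APalg k) :
    HasSum (fun lam => star (bohrCoeff k f lam) * bohrCoeff k g lam) (apMean (star f * g)) := by
  have h := (apExpBasis k).hasSum_inner_mul_inner
    (APMeanSq.mk f hf : UniformSpace.Completion (APMeanSq k))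
    (APMeanSq.mk g hg : UniformSpace.Completion (APMeanSq k))
  have hco : ∀ (u : APB k) (hu : u ∈ APalg k) (lam : Fin k → ℝ),
      inner ℂ (apExpBasis k lam)
        (APMeanSq.mk u hu : UniformSpace.Completion (APMeanSq k)) =
        bohrCoeff k u lam := by
    intro u hu lam
    rw [bohrCoeff_eq_apMean, ← star_apExp, apExpBasis, HilbertBasis.coe_mk, apExpHilbert,
      UniformSpace.Completion.inner_coe]
    rfl
  rw [UniformSpace.Completion.inner_coe] at h
  refine (h.congr_fun fun lam => ?_)
  rw [← inner_conj_symm, hco, hco]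
  rfl

theorem bohrCoeff_add {f g : APB k} (hf : f ∈ APalg k) (hg : g ∈ APalg k) (lam : Fin k → ℝ) :
    bohrCoeff k ⇑(f + g) lam = bohrCoeff k f lam + bohrCoeff k g lam := by
  simp only [bohrCoeff_eq_apMean]
  rw [mul_add, apMean_add (mul_mem (apExp_mem _) hf) (mul_mem (apExp_mem _) hg)]

theorem bohrCoeff_sub {f g : APB k} (hf : f ∈ APalg k) (hg : g ∈ APalg k) (lam : Fin k → ℝ) :
    bohrCoeff k ⇑(f - g) lam = bohrCoeff k f lam - bohrCoeff k g lam := by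
  simp only [bohrCoeff_eq_apMean]
  rw [mul_sub, apMean_sub (mul_mem (apExp_mem _) hf) (mul_mem (apExp_mem _) hg)]

theorem bohrCoeff_star {f : APB k} (hf : f ∈ APalg k) (lam : Fin k → ℝ) :
    bohrCoeff k ⇑(star f) lam = star (bohrCoeff k f (-lam)) := by
  simp only [bohrCoeff_eq_apMean]
  rw [← apMean_star (mul_mem (apExp_mem _) hf), star_mul', star_apExp, neg_neg]

theorem bohrCoeff_apExp_mul (f : APB k) (mu lam : Fin k → ℝ) :
    bohrCoeff k ⇑(apExp k mu * f) lam = bohrCoeff k f (lam - mu) := by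
  simp only [bohrCoeff_eq_apMean]
  rw [← mul_assoc, ← apExp_add, neg_sub, neg_add_eq_sub]

theorem bohrCoeff_const (c : ℂ) (lam : Fin k → ℝ) :
    bohrCoeff k ⇑(algebraMap ℂ (APB k) c) lam = if lam = 0 then c else 0 := by
  rw [bohrCoeff_eq_apMean, Algebra.algebraMap_eq_smul_one, mul_smul_comm, mul_one,
    apMean_smul _ (apExp_mem _), apMean_apExp]
  simp

/-- An almost periodic function is determined by its Bohr-Fourier coefficients. -/
theorem eq_zero_of_bohrCoeff_eq_zero {f : APB k} (hf : f ∈ APalg k)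
    (h : ∀ lam, bohrCoeff k f lam = 0) : f = 0 := by
  have hs := hasSum_bohrCoeff hf hf
  simp only [h, mul_zero] at hs
  have hval : ∀ x, (star f * f) x = (Complex.normSq (f x) : ℂ) := fun x => by
    rw [Complex.normSq_eq_conj_mul_self]; rfl
  ext x
  have h0 := re_eq_zero_of_apMean_eq_zero (mul_mem (star_mem_APalg hf) hf)
    (fun x => by rw [hval, Complex.ofReal_re]; exact Complex.normSq_nonneg _)
    (hs.unique hasSum_zero) x
  rw [hval, Complex.ofReal_re] at h0
  exact Complex.normSq_eq_zero.1 h0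

/-- The spectrum of a product is contained in the sum of the spectra. -/
theorem exists_of_mem_bohrSpectrum_mul {f g : APB k} (hf : f ∈ APalg k) (hg : g ∈ APalg k)
    {lam : Fin k → ℝ} (h : lam ∈ bohrSpectrum k ⇑(f * g)) :
    ∃ mu ∈ bohrSpectrum k f, lam - mu ∈ bohrSpectrum k g := by
  by_contra! hcon
  refine h ?_
  have hg' : star (apExp k (-lam) * g) ∈ APalg k :=
    star_mem_APalg (mul_mem (apExp_mem _) hg)
  have hs := hasSum_bohrCoeff hg' hf
  rw [star_star, mul_assoc, mul_comm g f, ← bohrCoeff_eq_apMean] at hs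
  refine hs.unique ?_
  convert hasSum_zero with mu
  by_cases hmu : bohrCoeff k f mu = 0
  · rw [hmu, mul_zero]
  · have := hcon mu hmu
    simp only [bohrSpectrum, Set.mem_ofPred_eq, not_not] at this
    rw [bohrCoeff_star (mul_mem (apExp_mem _) hg), bohrCoeff_apExp_mul, star_star,
      show -mu - -lam = lam - mu by abel, this, zero_mul]

/-- The algebra `AP^k_Δ` for an additive submonoid `Δ` of `ℝ^k`. -/
def APsub (k : ℕ) (Δ : AddSubmonoid (Fin k → ℝ)) : Subalgebra ℂ (APB k) where
  carrier := {f | APmem k Δ f}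
  add_mem' := by
    rintro f g ⟨hf, hf'⟩ ⟨hg, hg'⟩
    refine ⟨add_mem hf hg, fun lam hlam => ?_⟩
    by_contra hΔ
    have h1 : bohrCoeff k f lam = 0 := by_contra fun h => hΔ (hf' h)
    have h2 : bohrCoeff k g lam = 0 := by_contra fun h => hΔ (hg' h)
    exact hlam (by rw [bohrCoeff_add hf hg, h1, h2, add_zero])
  mul_mem' := by
    rintro f g ⟨hf, hf'⟩ ⟨hg, hg'⟩
    refine ⟨mul_mem hf hg, fun lam hlam => ?_⟩
    obtain ⟨mu, h1, h2⟩ := exists_of_mem_bohrSpectrum_mul hf hg hlam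
    have := add_mem (hf' h1) (hg' h2)
    rwa [add_sub_cancel] at this
  algebraMap_mem' c := by
    refine ⟨(APalg k).algebraMap_mem c, fun lam hlam => ?_⟩
    rw [bohrSpectrum, Set.mem_ofPred_eq, bohrCoeff_const] at hlam
    by_cases h : lam = 0
    · rw [h]; exact Δ.zero_mem
    · exact absurd (if_neg h) hlam

theorem APmem.star {Δ : Set (Fin k → ℝ)} {f : APB k} (hf : APmem k Δ f) :
    APmem k (-Δ) (star f) := by
  refine ⟨star_mem_APalg hf.1, fun lam hlam => hf.2 ?_⟩
  rw [bohrSpectrum, Set.mem_ofPred_eq, bohrCoeff_star hf.1] at hlam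
  exact fun h => hlam (by rw [h, star_zero])

/-- An almost periodic function with spectrum in `{0}` is constant. -/
theorem APmem.exists_eq_algebraMap {f : APB k} (hf : APmem k {0} f) :
    ∃ c : ℂ, f = algebraMap ℂ (APB k) c := by
  refine ⟨bohrCoeff k f 0, sub_eq_zero.1 (eq_zero_of_bohrCoeff_eq_zero
    (sub_mem hf.1 ((APalg k).algebraMap_mem _)) fun lam => ?_)⟩
  rw [bohrCoeff_sub hf.1 ((APalg k).algebraMap_mem _), bohrCoeff_const]
  split_ifs with h
  · rw [h, sub_self]
  · rw [sub_zero]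
    by_contra hne
    exact h (hf.2 hne)

end BohrSpectrum

section HermitianMatrix

open Matrix

/-- **Sylvester's law**: an invertible Hermitian matrix is congruent to a diagonal matrix with
entries `±1`. -/
theorem Matrix.IsHermitian.exists_congr_diagonal_sign {n : Type*} [Fintype n] [DecidableEq n]
    {C : Matrix n n ℂ} (hC : C.IsHermitian) (hdet : C.det ≠ 0) :
    ∃ (M N : Matrix n n ℂ) (D : n → ℂ), (∀ j, D j = 1 ∨ D j = -1) ∧ M * N = 1 ∧
      C = Mᴴ * Matrix.diagonal D * M := by
  set U : Matrix n n ℂ := hC.eigenvectorUnitary.val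
  have hUU : Uᴴ * U = 1 := Unitary.coe_star_mul_self hC.eigenvectorUnitary
  have hspec : C = U * Matrix.diagonal (fun i => (hC.eigenvalues i : ℂ)) * Uᴴ :=
    hC.spectral_theorem
  have hne : ∀ i, hC.eigenvalues i ≠ 0 := by
    intro i hi
    rw [hC.det_eq_prod_eigenvalues] at hdet
    exact hdet (Finset.prod_eq_zero (Finset.mem_univ i) (by simp [hi]))
  set r : n → ℝ := fun i => √|hC.eigenvalues i|
  have hr0 : ∀ i, (r i : ℂ) ≠ 0 := fun i => by
    exact_mod_cast (Real.sqrt_pos.2 (abs_pos.2 (hne i))).ne'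
  refine ⟨Matrix.diagonal (fun i => (r i : ℂ)) * Uᴴ,
    U * Matrix.diagonal (fun i => (r i : ℂ)⁻¹),
    fun i => if 0 < hC.eigenvalues i then 1 else -1, ?_, ?_, ?_⟩
  · intro j
    dsimp only
    split_ifs <;> simp
  · rw [Matrix.mul_assoc, ← Matrix.mul_assoc Uᴴ, hUU, Matrix.one_mul, Matrix.diagonal_mul_diagonal]
    simp [hr0]
  · have hd : Matrix.diagonal (fun i => (hC.eigenvalues i : ℂ)) =
        Matrix.diagonal (fun i => (r i : ℂ)) *
          Matrix.diagonal (fun i => if 0 < hC.eigenvalues i then (1 : ℂ) else -1) *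
          Matrix.diagonal (fun i => (r i : ℂ)) := by
      rw [Matrix.diagonal_mul_diagonal, Matrix.diagonal_mul_diagonal]
      congr 1
      ext i
      have hsq : (r i : ℂ) * r i = (|hC.eigenvalues i| : ℝ) := by
        rw [← Complex.ofReal_mul, Real.mul_self_sqrt (abs_nonneg _)]
      rw [mul_right_comm, hsq]
      split_ifs with h
      · rw [abs_of_pos h, mul_one]
      · rw [abs_of_nonpos (not_lt.1 h)]; simp
    have hstar : (Matrix.diagonal (fun i => (r i : ℂ)))ᴴ =
        Matrix.diagonal (fun i => (r i : ℂ)) := by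
      rw [Matrix.diagonal_conjTranspose]
      congr 1
      ext i
      simp
    rw [Matrix.conjTranspose_mul, Matrix.conjTranspose_conjTranspose, hstar]
    conv_lhs => rw [hspec, hd]
    simp only [Matrix.mul_assoc]

theorem Matrix.mul_mem_subalgebra {R A : Type*} [CommSemiring R] [Semiring A] [Algebra R A]
    {l m n : Type*} [Fintype m] (𝒜 : Subalgebra R A) {P : Matrix l m A} {Q : Matrix m n A}
    (hP : ∀ i j, P i j ∈ 𝒜) (hQ : ∀ i j, Q i j ∈ 𝒜) (i : l) (j : n) : (P * Q) i j ∈ 𝒜 :=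
  sum_mem fun x _ => mul_mem (hP i x) (hQ x j)

end HermitianMatrix

/-- **Theorem 5.5.**  Let `S ⊂ ℝ^k` be a halfspace and `Σ` an additive
subgroup of `ℝ^k`.  If `G ∈ (AP^k_Σ)^{n×n}` takes Hermitian values and admits
a canonical left `(AP_S)_Σ` factorization, then it admits one in the symmetric
form `G = B* D B`, where `B` is invertible over `AP^k_{Σ∩(-S)}` and `D` is a
constant diagonal matrix with `±1` entries on the diagonal. -/
theorem hermitian_canonical_factorization_symmetric (k n : ℕ)
    (S : Set (Fin k → ℝ)) (hS : IsHalfspace k S)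
    (Sg : AddSubgroup (Fin k → ℝ))
    (G : Matrix (Fin n) (Fin n) (APB k))
    (hG : ∀ i j, APmem k (↑Sg) (G i j))
    (hherm : ∀ (t : Fin k → ℝ) (i j : Fin n),
      (starRingEnd ℂ) (G i j t) = G j i t)
    (hfact : ∃ Gp Gm, IsAPFactorization k S (↑Sg) G
      (fun _ : Fin n => (0 : Fin k → ℝ)) Gp Gm) :
    ∃ (B : Matrix (Fin n) (Fin n) (APB k)) (D : Fin n → ℂ),
      (∀ j, D j = 1 ∨ D j = -1) ∧
      (∀ i j, APmem k ((↑Sg : Set (Fin k → ℝ)) ∩ (-S)) (B i j)) ∧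
      (∃ Binv : Matrix (Fin n) (Fin n) (APB k),
        (∀ i j, APmem k ((↑Sg : Set (Fin k → ℝ)) ∩ (-S)) (Binv i j)) ∧
        B * Binv = 1 ∧ Binv * B = 1) ∧
      G = B.conjTranspose * Matrix.diagonal (fun j => D j • (1 : APB k)) * B := by
  obtain ⟨Gp, Gm, hp, hm, -, ⟨Gpr, -, hppr⟩, ⟨Gml, hml, hmml⟩, hfac⟩ := hfact
  let Δ : AddSubmonoid (Fin k → ℝ) :=
    { carrier := (Sg : Set (Fin k → ℝ)) ∩ S
      add_mem' := fun ha hb => ⟨Sg.add_mem ha.1 hb.1, hS.add_mem _ ha.2 _ hb.2⟩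
      zero_mem' := ⟨Sg.zero_mem, (hS.inter.symm.subset rfl).1⟩ }
  have hneg : -((Sg : Set (Fin k → ℝ)) ∩ S) = (Sg : Set (Fin k → ℝ)) ∩ -S := by
    ext x; simp
  have hneg' : -((Sg : Set (Fin k → ℝ)) ∩ -S) = (Sg : Set (Fin k → ℝ)) ∩ S := by
    rw [← hneg, neg_neg]
  let Δ' : AddSubmonoid (Fin k → ℝ) :=
    { carrier := (Sg : Set (Fin k → ℝ)) ∩ -S
      add_mem' := fun {a b} ha hb => by
        rw [← hneg] at ha hb ⊢
        have := Δ.add_mem ha hb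
        rwa [← neg_add] at this
      zero_mem' := ⟨Sg.zero_mem, (hS.inter.symm.subset rfl).2⟩ }
  have hGm : Gml * Gm = 1 ∧ Gm * Gml = 1 := ⟨hmml, mul_eq_one_comm.1 hmml⟩
  have hGfac : G = Gp * Gm := by
    simp only [hfac, apExp_zero, Matrix.diagonal_one, Matrix.mul_one]
  have hGH : G.conjTranspose = G := by
    ext i j x
    exact hherm x j i
  -- The middle factor `L` in `G = Gm* L Gm` is Hermitian with spectrum in `S`, hence constant.
  set L : Matrix (Fin n) (Fin n) (APB k) := Gml.conjTranspose * Gp with hL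
  have hLG : L = Gml.conjTranspose * G * Gml := by
    rw [hGfac, Matrix.mul_assoc, Matrix.mul_assoc, hGm.2, Matrix.mul_one]
  have hLH : L.conjTranspose = L := by
    rw [hLG]
    simp only [Matrix.conjTranspose_mul, Matrix.conjTranspose_conjTranspose, hGH, Matrix.mul_assoc]
  have hGL : G = Gm.conjTranspose * L * Gm := by
    rw [hL, ← Matrix.mul_assoc, ← Matrix.conjTranspose_mul, hGm.1, Matrix.conjTranspose_one,
      Matrix.one_mul, hGfac]
  have hLS : ∀ i j, L i j ∈ APsub k Δ :=
    Matrix.mul_mem_subalgebra _ (fun i j => by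
      have := (hml j i).star
      rw [hneg'] at this
      exact this) hp
  have hLc : ∀ i j, ∃ c : ℂ, L i j = algebraMap ℂ (APB k) c := by
    intro i j
    refine APmem.exists_eq_algebraMap ⟨(hLS i j).1, ?_⟩
    have h2 : APmem k (-(Δ : Set (Fin k → ℝ))) (L i j) := by
      have := APmem.star (hLS j i)
      rwa [← Matrix.conjTranspose_apply, hLH] at this
    rw [← hS.inter]
    intro lam hlam
    exact ⟨((hLS i j).2 hlam).2, (h2.2 hlam).2⟩
  choose C hC using hLc
  have hLC : L = (Matrix.of C).map (algebraMap ℂ (APB k)) := by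
    ext1 i j
    exact hC i j
  have hstar : ∀ z : ℂ, star (algebraMap ℂ (APB k) z) = algebraMap ℂ (APB k) (star z) := by
    intro z
    ext x
    simp [Algebra.algebraMap_eq_smul_one]
  have hmapH : ∀ M : Matrix (Fin n) (Fin n) ℂ,
      (M.map (algebraMap ℂ (APB k))).conjTranspose = M.conjTranspose.map (algebraMap ℂ (APB k)) := by
    intro M
    ext1 i j
    exact hstar _
  have : Nontrivial (APB k) := ⟨0, 1, fun h => by simpa using DFunLike.congr_fun h 0⟩
  have hinj : Function.Injective (algebraMap ℂ (APB k)) := (algebraMap ℂ (APB k)).injective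
  have hCH : (Matrix.of C).IsHermitian := by
    refine Matrix.map_injective hinj ?_
    dsimp only
    rw [← hmapH, ← hLC, hLH]
  have hLinv : L * (Gpr * Gm.conjTranspose) = 1 := by
    rw [hL, Matrix.mul_assoc, ← Matrix.mul_assoc Gp, hppr, Matrix.one_mul,
      ← Matrix.conjTranspose_mul, hGm.2, Matrix.conjTranspose_one]
  have hdet : (Matrix.of C).det ≠ 0 := by
    intro h0
    have h1 := congrArg Matrix.det hLinv
    rw [Matrix.det_mul, hLC, ← RingHom.mapMatrix_apply, ← RingHom.map_det, h0, map_zero, zero_mul,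
      Matrix.det_one] at h1
    exact zero_ne_one h1
  obtain ⟨M, N, D, hD, hMN, hCM⟩ := hCH.exists_congr_diagonal_sign hdet
  have hB : M.map (algebraMap ℂ (APB k)) * Gm * (Gml * N.map (algebraMap ℂ (APB k))) = 1 := by
    rw [Matrix.mul_assoc, ← Matrix.mul_assoc Gm, hGm.2, Matrix.one_mul, ← Matrix.map_mul, hMN]
    exact Matrix.map_one _ (map_zero _) (map_one _)
  refine ⟨M.map (algebraMap ℂ (APB k)) * Gm, D, hD,
    Matrix.mul_mem_subalgebra (APsub k Δ') (fun i j => (APsub k Δ').algebraMap_mem _) hm,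
    ⟨Gml * N.map (algebraMap ℂ (APB k)),
      Matrix.mul_mem_subalgebra (APsub k Δ') hml (fun i j => (APsub k Δ').algebraMap_mem _),
      hB, mul_eq_one_comm.1 hB⟩, ?_⟩
  have hdiag : Matrix.diagonal (fun j => D j • (1 : APB k)) =
      (Matrix.diagonal D).map (algebraMap ℂ (APB k)) := by
    rw [Matrix.diagonal_map (map_zero _)]
    simp only [Algebra.algebraMap_eq_smul_one]
  conv_lhs => rw [hGL, hLC, hCM]
  rw [hdiag, Matrix.conjTranspose_mul, hmapH, Matrix.map_mul, Matrix.map_mul]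
  simp only [Matrix.mul_assoc]
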